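/- Solution of the limiting differential equation in the weak non-unitarity regime (Lemma 2.3(b)). Fix ρ > 0 and w ∈ ℂ. The function z ↦ K_w(z,w) := e^{−z²−w²} κ_w(z,w) satisfies K_w(w,w) = 0 and, for every z ∈ ℂ, its complex derivative in z equals F_w(z,w) := e^{−(z−w)²}( erfc(z+w−ρ/√2) − erfc(z+w+ρ/√2) ) − (1/√2)( e^{−(√2 z−ρ/2)²} + e^{−(√2 z+ρ/2)²} )·( erfc(√2 w−ρ/2) − erfc(√2 w+ρ/2) ). -/

import Mathlib

open MeasureTheory Filter Finset

noncomputable section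

namespace SI

/-- The entire extension of the error function: `erf(z) = (2/√π)∫₀¹ z e^{-s²z²} ds`. -/
def cerf (z : ℂ) : ℂ :=
  (2 / (Real.sqrt Real.pi : ℂ)) * ∫ s in (0:ℝ)..1, z * Complex.exp (-((s:ℂ)^2 * z^2))

/-- `erfc(z) = 1 - erf(z)`. -/
def cerfc (z : ℂ) : ℂ := 1 - cerf z

/-- `f_z(u) = (1/2) erfc(√2 (z-u))`. -/
def fz (z : ℂ) (u : ℝ) : ℂ := (1/2) * cerfc ((Real.sqrt 2 : ℂ) * (z - (u:ℂ)))

/-- The Wronskian `W(f_w, f_z)(u) = f_w(u) f_z'(u) - f_z(u) f_w'(u)` (derivative in `u`). -/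
def Wr (w z : ℂ) (u : ℝ) : ℂ := fz w u * deriv (fz z) u - fz z u * deriv (fz w) u

/-- The interpolating kernel `κ_w` of the weak non-unitarity regime,
with `α = ρ/(2√2)`. -/
def kweak (ρ : ℝ) (z w : ℂ) : ℂ :=
  (Real.sqrt Real.pi : ℂ) * Complex.exp (z^2+w^2) *
    ((∫ u in (-(ρ/(2*Real.sqrt 2)))..(ρ/(2*Real.sqrt 2)), Wr w z u)
      + fz w (ρ/(2*Real.sqrt 2)) * fz z (-(ρ/(2*Real.sqrt 2)))
      - fz z (ρ/(2*Real.sqrt 2)) * fz w (-(ρ/(2*Real.sqrt 2))))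

/-- The inhomogeneous term `F_w` of the weak non-unitarity regime. -/
def Fweak (ρ : ℝ) (z w : ℂ) : ℂ :=
  Complex.exp (-(z-w)^2) *
      (cerfc (z+w-((ρ/Real.sqrt 2 : ℝ) : ℂ)) - cerfc (z+w+((ρ/Real.sqrt 2 : ℝ) : ℂ)))
    - (1/(Real.sqrt 2 : ℂ)) *
      (Complex.exp (-((Real.sqrt 2 : ℂ)*z - ((ρ/2 : ℝ):ℂ))^2)
        + Complex.exp (-((Real.sqrt 2 : ℂ)*z + ((ρ/2 : ℝ):ℂ))^2)) *
      (cerfc ((Real.sqrt 2 : ℂ)*w - ((ρ/2 : ℝ):ℂ)) - cerfc ((Real.sqrt 2 : ℂ)*w + ((ρ/2 : ℝ):ℂ)))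

lemma hasDerivAt_param (F F' : ℂ → ℝ → ℂ) (a b : ℝ) (z₀ : ℂ)
    (hF : Continuous (Function.uncurry F)) (hF' : Continuous (Function.uncurry F'))
    (hd : ∀ z s, HasDerivAt (fun z => F z s) (F' z s) z) :
    HasDerivAt (fun z => ∫ s in a..b, F z s) (∫ s in a..b, F' z₀ s) z₀ := by
  have hc : IsCompact (Metric.closedBall z₀ 1 ×ˢ Set.uIcc a b) :=
    (isCompact_closedBall z₀ 1).prod isCompact_uIcc
  obtain ⟨C, hC⟩ := hc.exists_bound_of_continuousOn hF'.continuousOn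
  have hFs : ∀ z, Continuous (F z) := fun z => hF.comp (Continuous.prodMk_right z)
  have hFs' : ∀ z, Continuous (F' z) := fun z => hF'.comp (Continuous.prodMk_right z)
  refine (intervalIntegral.hasDerivAt_integral_of_dominated_loc_of_deriv_le
    (bound := fun _ => C) (Metric.ball_mem_nhds z₀ one_pos)
    (Eventually.of_forall fun z => (hFs z).aestronglyMeasurable)
    ((hFs z₀).intervalIntegrable a b) (hFs' z₀).aestronglyMeasurable
    (Eventually.of_forall fun s hs z hz => ?_) (by simp)
    (Eventually.of_forall fun s hs z hz => hd z s)).2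
  exact hC (z, s) ⟨Metric.ball_subset_closedBall hz, Set.uIoc_subset_uIcc hs⟩

lemma hasDerivAt_cerf (z : ℂ) :
    HasDerivAt cerf (2 / (Real.sqrt Real.pi : ℂ) * Complex.exp (-z^2)) z := by
  unfold cerf
  refine HasDerivAt.const_mul _ ?_
  have h := hasDerivAt_param (fun z s => z * Complex.exp (-((s:ℂ)^2 * z^2)))
    (fun z s => (1 - 2 * (s:ℂ)^2*z^2) * Complex.exp (-((s:ℂ)^2 * z^2))) 0 1 z
    (by unfold Function.uncurry; fun_prop) (by unfold Function.uncurry; fun_prop) (by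
      intro z s
      have := (hasDerivAt_id z).mul
        ((((hasDerivAt_id z).pow 2).const_mul ((s:ℂ)^2)).neg.cexp)
      refine this.congr_deriv ?_
      simp; ring)
  refine h.congr_deriv ?_
  have := intervalIntegral.integral_eq_sub_of_hasDerivAt (a := 0) (b := 1)
    (f := fun s : ℝ => (s:ℂ) * Complex.exp (-((s:ℂ)^2 * z^2)))
    (f' := fun s : ℝ => (1 - 2 * (s:ℂ)^2*z^2) * Complex.exp (-((s:ℂ)^2 * z^2)))
    (by
      intro s _
      have := (Complex.ofRealCLM.hasDerivAt (x := s)).mul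
        ((((Complex.ofRealCLM.hasDerivAt (x := s)).pow 2).mul_const (z^2)).neg.cexp)
      refine this.congr_deriv ?_
      simp; ring)
    (Continuous.intervalIntegrable (by fun_prop) _ _)
  refine this.trans ?_
  simp

lemma cerf_neg (z : ℂ) : cerf (-z) = - cerf z := by
  unfold cerf; simp

/-- u-derivative -/
def gz (z : ℂ) (u : ℝ) : ℂ :=
  (Real.sqrt 2 : ℂ) / (Real.sqrt Real.pi : ℂ) * Complex.exp (-((Real.sqrt 2 : ℂ) * (z - (u:ℂ)))^2)

lemma continuous_cerf : Continuous cerf :=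
  continuous_iff_continuousAt.2 fun z => (hasDerivAt_cerf z).continuousAt

lemma continuous_fz : Continuous (fun p : ℂ × ℝ => fz p.1 p.2) := by
  unfold fz cerfc
  have := continuous_cerf
  fun_prop

lemma continuous_gz : Continuous (fun p : ℂ × ℝ => gz p.1 p.2) := by
  unfold gz
  fun_prop

lemma fz_u (z : ℂ) (u : ℝ) : HasDerivAt (fz z) (gz z u) u := by
  unfold fz cerfc
  have h1 : HasDerivAt (fun u : ℝ => (Real.sqrt 2 : ℂ) * (z - (u:ℂ))) (-(Real.sqrt 2 : ℂ)) u := by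
    have := ((Complex.ofRealCLM.hasDerivAt (x := u)).const_sub z).const_mul (Real.sqrt 2 : ℂ)
    refine this.congr_deriv ?_
    simp
  have := (((hasDerivAt_cerf _).comp u h1).const_sub 1).const_mul (1/2 : ℂ)
  refine this.congr_deriv ?_
  unfold gz; ring

lemma fz_z (z : ℂ) (u : ℝ) : HasDerivAt (fun z => fz z u) (-gz z u) z := by
  unfold fz cerfc
  have h1 : HasDerivAt (fun z : ℂ => (Real.sqrt 2 : ℂ) * (z - (u:ℂ))) ((Real.sqrt 2 : ℂ)) z := by
    have := ((hasDerivAt_id z).sub_const (u:ℂ)).const_mul (Real.sqrt 2 : ℂ)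
    refine this.congr_deriv ?_
    simp
  have := (((hasDerivAt_cerf _).comp z h1).const_sub 1).const_mul (1/2 : ℂ)
  refine this.congr_deriv ?_
  unfold gz; ring

lemma sq2 : (Real.sqrt 2 : ℂ)^2 = 2 := by
  rw [← Complex.ofReal_pow, Real.sq_sqrt (by norm_num)]; simp

/-- z-derivative of gz -/
def hz (z : ℂ) (u : ℝ) : ℂ := gz z u * (-4 * (z - u))

lemma gz_z (z : ℂ) (u : ℝ) : HasDerivAt (fun z => gz z u) (hz z u) z := by
  unfold hz gz
  have h1 : HasDerivAt (fun z : ℂ => (Real.sqrt 2 : ℂ) * (z - (u:ℂ))) ((Real.sqrt 2 : ℂ)) z := by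
    have := ((hasDerivAt_id z).sub_const (u:ℂ)).const_mul (Real.sqrt 2 : ℂ)
    refine this.congr_deriv ?_
    simp
  have := (h1.pow 2).neg.cexp.const_mul ((Real.sqrt 2 : ℂ) / (Real.sqrt Real.pi : ℂ))
  refine this.congr_deriv ?_
  simp
  linear_combination (2 * (Real.sqrt 2 : ℂ) / (Real.sqrt Real.pi : ℂ) * Complex.exp (-((Real.sqrt 2 : ℂ) * (z - (u:ℂ)))^2) * (z - u)) * sq2

lemma gz_u (z : ℂ) (u : ℝ) : HasDerivAt (gz z) (-hz z u) u := by
  unfold hz gz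
  have h1 : HasDerivAt (fun u : ℝ => (Real.sqrt 2 : ℂ) * (z - (u:ℂ))) (-(Real.sqrt 2 : ℂ)) u := by
    have := ((Complex.ofRealCLM.hasDerivAt (x := u)).const_sub z).const_mul (Real.sqrt 2 : ℂ)
    refine this.congr_deriv ?_
    simp
  have := (h1.pow 2).neg.cexp.const_mul ((Real.sqrt 2 : ℂ) / (Real.sqrt Real.pi : ℂ))
  refine this.congr_deriv ?_
  simp
  linear_combination (2 * (Real.sqrt 2 : ℂ) / (Real.sqrt Real.pi : ℂ) * Complex.exp (-((Real.sqrt 2 : ℂ) * (z - (u:ℂ)))^2) * (z - u)) * sq2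

/-- antiderivative of the z-derivative of the Wronskian -/
def Pz (w z : ℂ) (u : ℝ) : ℂ :=
  1 / (Real.sqrt Real.pi : ℂ) * Complex.exp (-(z-w)^2) * cerf (2 * (u:ℂ) - (z + w)) - fz w u * gz z u

lemma sqpi : (Real.sqrt Real.pi : ℂ) ≠ 0 := by
  exact_mod_cast (Real.sqrt_pos.2 Real.pi_pos).ne'

lemma Pz_u (w z : ℂ) (u : ℝ) :
    HasDerivAt (Pz w z) (fz w u * hz z u + gz z u * gz w u) u := by
  unfold Pz
  have h1 : HasDerivAt (fun u : ℝ => 2 * (u:ℂ) - (z + w)) 2 u := by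
    have := ((Complex.ofRealCLM.hasDerivAt (x := u)).const_mul (2:ℂ)).sub_const (z + w)
    refine this.congr_deriv ?_
    simp
  have := (((hasDerivAt_cerf _).comp u h1).const_mul
    (1 / (Real.sqrt Real.pi : ℂ) * Complex.exp (-(z-w)^2))).sub ((fz_u w u).mul (gz_u z u))
  refine this.congr_deriv ?_
  have key : Complex.exp (-(z-w)^2) * Complex.exp (-(2 * (u:ℂ) - (z + w))^2)
      = Complex.exp (-((Real.sqrt 2 : ℂ) * (z - (u:ℂ)))^2) * Complex.exp (-((Real.sqrt 2 : ℂ) * (w - (u:ℂ)))^2) := by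
    rw [← Complex.exp_add, ← Complex.exp_add]
    congr 1
    rw [mul_pow, mul_pow, sq2]; ring
  have hg : gz z u * gz w u = 2 / (Real.sqrt Real.pi : ℂ)^2 * (Complex.exp (-(z-w)^2) * Complex.exp (-(2 * (u:ℂ) - (z + w))^2)) := by
    rw [key]; unfold gz
    linear_combination (Complex.exp (-((Real.sqrt 2 : ℂ) * (z - (u:ℂ)))^2) * Complex.exp (-((Real.sqrt 2 : ℂ) * (w - (u:ℂ)))^2) / (Real.sqrt Real.pi : ℂ)^2) * sq2
  linear_combination -2 * hg

lemma Wr_eq (w z : ℂ) (u : ℝ) : Wr w z u = fz w u * gz z u - fz z u * gz w u := by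
  unfold Wr; rw [(fz_u z u).deriv, (fz_u w u).deriv]

lemma int_Wr (w z : ℂ) (a b : ℝ) :
    HasDerivAt (fun z => ∫ u in a..b, Wr w z u) (Pz w z b - Pz w z a) z := by
  simp_rw [Wr_eq]
  have c1 : Continuous (fun p : ℂ × ℝ => fz w p.2) :=
    Continuous.comp (g := fun p : ℂ × ℝ => fz p.1 p.2) (f := fun p : ℂ × ℝ => (w, p.2)) continuous_fz (by fun_prop)
  have c2 : Continuous (fun p : ℂ × ℝ => gz w p.2) :=
    Continuous.comp (g := fun p : ℂ × ℝ => gz p.1 p.2) (f := fun p : ℂ × ℝ => (w, p.2)) continuous_gz (by fun_prop)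
  have c3 := continuous_fz
  have c4 := continuous_gz
  have hcont : Continuous (fun p : ℂ × ℝ => fz w p.2 * hz p.1 p.2 + gz p.1 p.2 * gz w p.2) := by
    unfold hz; fun_prop
  have h := hasDerivAt_param (fun z u => fz w u * gz z u - fz z u * gz w u)
    (fun z u => fz w u * hz z u + gz z u * gz w u) a b z
    (by unfold Function.uncurry; fun_prop) hcont (by
      intro z u
      have := ((gz_z z u).const_mul (fz w u)).sub ((fz_z z u).mul_const (gz w u))
      refine this.congr_deriv ?_
      ring)
  refine h.congr_deriv ?_
  exact (intervalIntegral.integral_eq_sub_of_hasDerivAt (fun u _ => Pz_u w z u)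
    ((hcont.comp (Continuous.prodMk_right z)).intervalIntegrable a b))

/-- Lemma 2.3(b): the interpolating kernel solves the limiting
differential equation of the weak non-unitarity regime. -/
theorem limiting_ODE_weak (ρ : ℝ) (hρ : 0 < ρ) (w : ℂ) :
    Complex.exp (-w^2-w^2) * kweak ρ w w = 0 ∧
    ∀ z : ℂ, HasDerivAt (fun z => Complex.exp (-z^2-w^2) * kweak ρ z w) (Fweak ρ z w) z := by
  constructor
  · simp [kweak, Wr]
  intro z
  have hE : (fun z => Complex.exp (-z^2-w^2) * kweak ρ z w) = fun z =>
    (Real.sqrt Real.pi : ℂ) * 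
    ((∫ u in (-(ρ/(2*Real.sqrt 2)))..(ρ/(2*Real.sqrt 2)), Wr w z u)
      + fz w (ρ/(2*Real.sqrt 2)) * fz z (-(ρ/(2*Real.sqrt 2)))
      - fz z (ρ/(2*Real.sqrt 2)) * fz w (-(ρ/(2*Real.sqrt 2)))) := by
    funext z
    have : Complex.exp (-z^2-w^2) * Complex.exp (z^2+w^2) = 1 := by
      rw [← Complex.exp_add]; ring_nf; simp
    unfold kweak
    linear_combination ((Real.sqrt Real.pi : ℂ) * 
    ((∫ u in (-(ρ/(2*Real.sqrt 2)))..(ρ/(2*Real.sqrt 2)), Wr w z u)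
      + fz w (ρ/(2*Real.sqrt 2)) * fz z (-(ρ/(2*Real.sqrt 2)))
      - fz z (ρ/(2*Real.sqrt 2)) * fz w (-(ρ/(2*Real.sqrt 2))))) * this
  rw [hE]
  have hs : (Real.sqrt 2) ≠ 0 := by positivity
  have hsq : Real.sqrt 2 ^ 2 = 2 := Real.sq_sqrt (by norm_num)
  have hα1 : Real.sqrt 2 * (ρ/(2*Real.sqrt 2)) = ρ / 2 := by field_simp
  have hα2 : 2 * (ρ/(2*Real.sqrt 2)) = ρ / Real.sqrt 2 := by field_simp
  generalize ρ/(2*Real.sqrt 2) = α at *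
  have hd := (((int_Wr w z (-α) α).add ((fz_z z (-α)).const_mul (fz w α))).sub
    ((fz_z z α).mul_const (fz w (-α)))).const_mul (Real.sqrt Real.pi : ℂ)
  refine hd.congr_deriv ?_
  unfold Fweak
  rw [← hα1, ← hα2]
  have e1 : cerf (2 * (α:ℂ) - (z + w)) = - cerf (z + w - 2 * α) := by
    rw [← cerf_neg]; congr 1; ring
  have e2 : cerf (2 * ((-α : ℝ):ℂ) - (z + w)) = - cerf (z + w + 2 * α) := by
    rw [← cerf_neg]; congr 1; push_cast; ring
  have a1 : ∀ z : ℂ, (Real.sqrt 2 : ℂ) * (z - ((-α:ℝ):ℂ)) = Real.sqrt 2 * z + Real.sqrt 2 * α := by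
    intro z; push_cast; ring
  have a2 : ∀ z : ℂ, (Real.sqrt 2 : ℂ) * (z - (α:ℂ)) = Real.sqrt 2 * z - Real.sqrt 2 * α := by
    intro z; ring
  have hs' : (Real.sqrt 2 : ℂ) ≠ 0 := by exact_mod_cast hs
  have hi : 1 / (Real.sqrt 2 : ℂ) = Real.sqrt 2 / 2 := by
    rw [div_eq_div_iff hs' two_ne_zero]; linear_combination -sq2
  have hpi := sqpi
  unfold Pz
  rw [e1, e2, hi]
  unfold fz gz cerfc
  simp only [a1, a2]
  push_cast
  field_simp
  ring

end SI
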